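/- Let n ≥ 3 be an odd integer and ε > 0. There exists a constant c > 0 depending only on n and ε such that: for every real-split central division ℚ-algebra A of degree n, every order 𝒪 ⊆ A, every z ∈ GL_n(ℝ), every real L ≥ 1, and every δ with 0 < δ ≤ c·L^{-2-ε}, the ℚ-subalgebra of A generated by ⋃_{1≤m≤L} 𝒪(m; z, δ) is commutative (hence a field). -/

import Mathlib

open Matrix

/-- `IsSO k` : `k ∈ SO(n)`. -/
def IsSO {n : ℕ} (k : Matrix (Fin n) (Fin n) ℝ) : Prop :=
  kᵀ * k = 1 ∧ k.det = 1

/-- An order in a `ℚ`-algebra: a subring which is finitely generated as a `ℤ`-module and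
contains a `ℚ`-basis of the algebra. -/
def IsOrder (A : Type*) [Ring A] [Algebra ℚ A] (O : Subring A) : Prop :=
  O.toAddSubgroup.FG ∧ Submodule.span ℚ (O : Set A) = ⊤

/-- The set `𝒪(m; z, δ)`. -/
noncomputable def OSet {n : ℕ} {A : Type*} [DivisionRing A] [CharZero A]
    (ι : A →ₐ[ℚ] Matrix (Fin n) (Fin n) ℝ) (O : Subring A)
    (z : Matrix.GeneralLinearGroup (Fin n) ℝ) (m : ℕ) (δ : ℝ) : Set A :=
  {γ | γ ∈ O ∧ (ι γ).det = (m : ℝ) ∧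
    ∃ k : Matrix (Fin n) (Fin n) ℝ, IsSO k ∧
      ∀ i j, |(((m : ℝ) ^ (-(1 : ℝ) / (n : ℝ))) •
        ((↑z⁻¹ : Matrix (Fin n) (Fin n) ℝ) * ι γ * (↑z : Matrix (Fin n) (Fin n) ℝ)) - k) i j| < δ}

/-!
For odd `n`, `det (u - w) = 0` for all `u, w ∈ SO(n)`, because `uᵀ (u - w) wᵀ = -(u - w)ᵀ`. In
particular commutators `k l - l k` in `SO(n)` are singular, and by compactness
`|det (P Q - Q P)| ≤ C δ` for all `P, Q` within `δ ≤ 1` of `SO(n)`. For `γ ∈ 𝒪(m; z, δ)` and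
`γ' ∈ 𝒪(m'; z, δ)` this reads `|nr (γ γ' - γ' γ)| ≤ C m m' δ ≤ C L² δ`.

On the other hand `1 ≤ |nr x|` for every nonzero integral `x`. The determinant of an integral matrix
is integral, and some power of `nr x` is rational: `ℝ ⊗ A` is simple, so its representation on `ℝⁿ`
and its regular representation are both multiples of one simple module, and the determinant in the
latter is the norm of `A` over `ℚ`. Hence `γ γ' = γ' γ` as soon as `C L² δ < 1`.
-/

open scoped TensorProduct

section CentralDivision

variable {k A E κ : Type*} [Field k] [Ring E] [Algebra k E]

theorem add_sum_map_mul_ne_zero_of_mem_center [Ring A] [Algebra k A] [Algebra.IsCentral k A]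
    {f : A →ₐ[k] E} {r : κ → E} (hr : LinearIndependent k r) {j : κ} {t : Finset κ} (hj : j ∉ t)
    {a : κ → A} (hcentral : ∀ i ∈ t, a i ∈ Subalgebra.center k A) :
    r j + ∑ i ∈ t, f (a i) * r i ≠ 0 := by
  classical
  intro hsum
  choose! q hq using fun i hi ↦ (Algebra.IsCentral.mem_center_iff k).1 (hcentral i hi)
  have hrel : ∑ i ∈ insert j t, (if i = j then 1 else q i) • r i = 0 := by
    rw [Finset.sum_insert hj, if_pos rfl, one_smul, ← hsum]
    congr 1
    refine Finset.sum_congr rfl fun i hi ↦ ?_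
    rw [if_neg (ne_of_mem_of_not_mem hi hj), hq i hi, f.commutes, Algebra.smul_def]
  simpa using linearIndependent_iff'.1 hr _ _ hrel j (Finset.mem_insert_self j t)

variable [DivisionRing A] [Algebra k A] [Algebra.IsCentral k A]

-- In a relation whose first coefficient is normalised to `1`, taking commutators with `f b` gives a
-- shorter relation, so by induction the coefficients commute with every `b`: they are scalars.
theorem eq_zero_of_sum_map_mul_eq_zero (f : A →ₐ[k] E) {r : κ → E}
    (hr : LinearIndependent k r) (hcomm : ∀ a i, Commute (f a) (r i)) (s : Finset κ) (a : κ → A)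
    (hsum : ∑ i ∈ s, f (a i) * r i = 0) : ∀ i ∈ s, a i = 0 := by
  classical
  induction s using Finset.induction_on generalizing a with
  | empty => simp
  | insert j t hj ih =>
    rw [Finset.sum_insert hj] at hsum
    suffices haj : a j = 0 by
      have htail := ih a (by simpa [haj] using hsum)
      simpa [haj] using htail
    by_contra haj
    have hnormalized : r j + ∑ i ∈ t, f ((a j)⁻¹ * a i) * r i = 0 := by
      have := congrArg (f (a j)⁻¹ * ·) hsum
      simpa [mul_add, Finset.mul_sum, ← mul_assoc, ← map_mul, haj] using this
    have hcommutator : ∀ b : A, ∑ i ∈ t, f (b * ((a j)⁻¹ * a i) - (a j)⁻¹ * a i * b) * r i = 0 := by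
      intro b
      have hb : f b * (r j + ∑ i ∈ t, f ((a j)⁻¹ * a i) * r i) -
          (r j + ∑ i ∈ t, f ((a j)⁻¹ * a i) * r i) * f b = 0 := by
        rw [hnormalized, mul_zero, zero_mul, sub_zero]
      rw [mul_add, add_mul, (hcomm b j).eq, add_sub_add_left_eq_sub, Finset.mul_sum,
        Finset.sum_mul, ← Finset.sum_sub_distrib] at hb
      rw [← hb]
      refine Finset.sum_congr rfl fun i _ ↦ ?_
      simp only [map_sub, map_mul, sub_mul, mul_assoc, (hcomm b i).eq]
    refine add_sum_map_mul_ne_zero_of_mem_center hr hj (fun i hi ↦ ?_) hnormalized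
    exact Subalgebra.mem_center_iff.2 fun b ↦ sub_eq_zero.1 (ih _ (hcommutator b) i hi)

theorem algHom_tensorProduct_injective {C : Type*} [Ring C] [Algebra k C] [IsSimpleRing C]
    [Nontrivial E] (φ : C ⊗[k] A →ₐ[k] E) : Function.Injective φ := by
  classical
  let f : A →ₐ[k] E := φ.comp Algebra.TensorProduct.includeRight
  let g : C →ₐ[k] E := φ.comp Algebra.TensorProduct.includeLeft
  have hcomm : ∀ a c, Commute (f a) (g c) := fun a c ↦ by
    simp [f, g, Commute, SemiconjBy, ← map_mul]
  let b := Module.Basis.ofVectorSpace k C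
  have hb : LinearIndependent k (g ∘ b) :=
    b.linearIndependent.map' g.toLinearMap (LinearMap.ker_eq_bot.2 g.toRingHom.injective)
  refine (injective_iff_map_eq_zero φ).2 fun t ht ↦ ?_
  obtain ⟨a, rfl⟩ := (TensorProduct.equivFinsuppOfBasisLeft b (N := A)).symm.surjective t
  have hsum : ∑ i ∈ a.support, f (a i) * g (b i) = 0 := by
    rw [← ht]
    simp [f, g, Finsupp.sum, ← map_mul]
  have ha : a = 0 := Finsupp.support_eq_empty.1 <| Finset.eq_empty_of_forall_notMem fun i hi ↦
    Finsupp.mem_support_iff.1 hi <|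
      eq_zero_of_sum_map_mul_eq_zero f hb (fun a i ↦ hcomm a (b i)) _ a hsum i hi
  rw [ha, map_zero]

instance isSimpleRing_tensorProduct {C : Type*} [Ring C] [Algebra k C] [IsSimpleRing C] :
    IsSimpleRing (C ⊗[k] A) := by
  refine .of_eq_bot_or_eq_top fun I ↦ ?_
  rcases subsingleton_or_nontrivial I.ringCon.Quotient with hI | hI
  · right
    rw [← I.one_mem_iff, I.mem_iff, ← I.ringCon.eq]
    exact Subsingleton.elim _ _
  · left
    rw [← I.ker_ringCon_mk', TwoSidedIdeal.ker_eq_bot]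
    exact algHom_tensorProduct_injective (I.ringCon.mkₐ k)

end CentralDivision

theorem det_lsmul_congr {K B M N : Type*} [CommRing K] [Ring B] [Algebra K B]
    [AddCommGroup M] [Module K M] [Module B M] [IsScalarTower K B M]
    [AddCommGroup N] [Module K N] [Module B N] [IsScalarTower K B N] (e : M ≃ₗ[B] N) (b : B) :
    LinearMap.det (Algebra.lsmul K K M b) = LinearMap.det (Algebra.lsmul K K N b) := by
  rw [← LinearMap.det_conj _ (e.restrictScalars K)]
  congr 1
  ext x
  simp

theorem det_lsmul_pi {K B ι M : Type*} [CommRing K] [Ring B] [Algebra K B]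
    [Fintype ι] [AddCommGroup M] [Module K M] [Module B M] [IsScalarTower K B M]
    [Module.Free K M] [Module.Finite K M] (b : B) :
    LinearMap.det (Algebra.lsmul K K (ι → M) b) =
      LinearMap.det (Algebra.lsmul K K M b) ^ Fintype.card ι := by
  rw [← Finset.card_univ, ← Finset.prod_const, ← LinearMap.det_pi]
  rfl

theorem isIsotypicOfType_of_isSimpleRing (R M S : Type*) [Ring R] [IsSimpleRing R]
    [IsArtinianRing R] [AddCommGroup M] [Module R M] [AddCommGroup S] [Module R S]
    [IsSimpleModule R S] : IsIsotypicOfType R M S := by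
  intro m _
  obtain ⟨I, ⟨eI⟩⟩ := IsSemisimpleRing.exists_linearEquiv_ideal_of_isSimpleModule R m
  obtain ⟨J, ⟨eJ⟩⟩ := IsSemisimpleRing.exists_linearEquiv_ideal_of_isSimpleModule R S
  have := IsSimpleModule.congr eI.symm
  have := IsSimpleModule.congr eJ.symm
  obtain ⟨e⟩ := IsSimpleRing.isIsotypic R R J I
  exact ⟨eI.trans (e.trans eJ.symm)⟩

theorem exists_det_pow_eq_norm_pow {K B V : Type*} [Field K] [Ring B] [Algebra K B]
    [IsSimpleRing B] [FiniteDimensional K B] [AddCommGroup V] [Module K V] [FiniteDimensional K V]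
    (ρ : B →ₐ[K] Module.End K V) :
    ∃ d ≠ 0, ∃ r, ∀ b, LinearMap.det (ρ b) ^ d = Algebra.norm K b ^ r := by
  let : Module B V := Module.compHom V ρ.toRingHom
  have : IsScalarTower K B V := ⟨fun c b v ↦ by
    change ρ (c • b) v = c • ρ b v
    simp⟩
  have : IsArtinianRing B := .of_finite K B
  have : Module.Finite B V := .of_restrictScalars_finite K B V
  obtain ⟨d, hd, S, _, ⟨e⟩⟩ := (IsSimpleRing.isIsotypic B B).linearEquiv_fun
  obtain ⟨r, ⟨e'⟩⟩ := (isIsotypicOfType_of_isSimpleRing B V S).linearEquiv_fun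
  refine ⟨d, hd.ne, r, fun b ↦ ?_⟩
  have hV : LinearMap.det (ρ b) = LinearMap.det (Algebra.lsmul K K S b) ^ r :=
    (det_lsmul_congr e' b).trans (by rw [det_lsmul_pi, Fintype.card_fin])
  have hB : Algebra.norm K b = LinearMap.det (Algebra.lsmul K K S b) ^ d :=
    (det_lsmul_congr e b).trans (by rw [det_lsmul_pi, Fintype.card_fin])
  rw [hV, hB, pow_right_comm]

theorem norm_one_tmul {k A : Type*} (L : Type*) [CommRing k] [CommRing L] [Algebra k L]
    [Ring A] [Algebra k A] [Module.Free k A] [Module.Finite k A] (x : A) :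
    Algebra.norm L (1 ⊗ₜ[k] x : L ⊗[k] A) = algebraMap k L (Algebra.norm k x) := by
  rw [Algebra.norm_apply, Algebra.norm_apply, ← LinearMap.det_baseChange]
  congr 1
  ext y
  simp

theorem exists_matrix_det_pow_mem_range_algebraMap {k L A ι : Type*} [Field k] [Field L]
    [Algebra k L] [DivisionRing A] [Algebra k A] [Algebra.IsCentral k A]
    [Fintype ι] [DecidableEq ι] [Nonempty ι] (f : A →ₐ[k] Matrix ι ι L) :
    ∃ d ≠ 0, ∀ x, (f x).det ^ d ∈ Set.range (algebraMap k L) := by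
  let F : L ⊗[k] A →ₐ[L] Matrix ι ι L := AlgHom.liftEquiv k L A _ f
  have : FiniteDimensional L (L ⊗[k] A) :=
    .of_injective F.toLinearMap F.toRingHom.injective
  have : FiniteDimensional k A := .of_finite_tensorProduct_of_faithfullyFlat L
  obtain ⟨d, hd, r, hdr⟩ := exists_det_pow_eq_norm_pow
    ((Matrix.toLinAlgEquiv' (R := L) (n := ι)).toAlgHom.comp F)
  refine ⟨d, hd, fun x ↦ ⟨Algebra.norm k x ^ r, ?_⟩⟩
  rw [map_pow, ← norm_one_tmul L x, ← hdr]
  have hdet : LinearMap.det (Matrix.toLinAlgEquiv' (f x)) = (f x).det :=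
    LinearMap.det_toLin' (f x)
  simp [F, hdet]

open Polynomial in
theorem isIntegral_of_mem_spectrum {R K B : Type*} [CommRing R] [Field K] [Ring B]
    [Nontrivial B] [Algebra R K] [Algebra K B] [Algebra R B] [IsScalarTower R K B] {x : B}
    (hx : IsIntegral R x) {μ : K} (hμ : μ ∈ spectrum K x) : IsIntegral R μ := by
  obtain ⟨p, hp, hpx⟩ := hx
  refine ⟨p, hp, ?_⟩
  have := spectrum.subset_polynomial_aeval x (p.map (algebraMap R K)) ⟨μ, hμ, rfl⟩
  rw [aeval_map_algebraMap, aeval_def, hpx, spectrum.zero_eq] at this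
  simpa [eval_map] using this

open Polynomial in
theorem isIntegral_matrix_det {R K ι : Type*} [CommRing R] [Field K] [Algebra R K]
    [Fintype ι] [DecidableEq ι] {M : Matrix ι ι K} (hM : IsIntegral R M) : IsIntegral R M.det := by
  cases isEmpty_or_nonempty ι
  · simp [isIntegral_one]
  let φ := Algebra.ofId K (AlgebraicClosure K)
  have hφM : IsIntegral R (φ.mapMatrix M) := hM.map (φ.restrictScalars R).mapMatrix
  refine (isIntegral_algebraMap_iff (FaithfulSMul.algebraMap_injective K (AlgebraicClosure K))).1 ?_
  change IsIntegral R (φ M.det)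
  rw [AlgHom.map_det, det_eq_prod_roots_charpoly_of_splits (IsAlgClosed.splits _)]
  refine .multiset_prod fun μ hμ ↦ isIntegral_of_mem_spectrum hφM ?_
  exact mem_spectrum_iff_isRoot_charpoly.2 (isRoot_of_mem_roots hμ)

theorem one_le_abs_of_isIntegral_of_pow_mem_range {t : ℝ} (ht : IsIntegral ℤ t) (ht0 : t ≠ 0)
    {d : ℕ} (hd : d ≠ 0) (hrat : t ^ d ∈ Set.range (algebraMap ℚ ℝ)) : 1 ≤ |t| := by
  obtain ⟨q, hq⟩ := hrat
  have hqint : IsIntegral ℤ q :=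
    (isIntegral_algebraMap_iff (algebraMap ℚ ℝ).injective).1 (hq ▸ ht.pow d)
  obtain ⟨N, rfl⟩ := IsIntegrallyClosed.isIntegral_iff.1 hqint
  have hN : t ^ d = N := by simpa using hq.symm
  have hN0 : N ≠ 0 := by
    rintro rfl
    simp [ht0, hd] at hN
  rw [← one_le_pow_iff_of_nonneg (abs_nonneg t) hd, ← abs_pow, hN]
  exact_mod_cast Int.one_le_abs hN0

theorem one_le_abs_det_of_isIntegral {A ι : Type*} [DivisionRing A] [Algebra ℚ A]
    [Algebra.IsCentral ℚ A] [Fintype ι] [DecidableEq ι] (f : A →ₐ[ℚ] Matrix ι ι ℝ)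
    {x : A} (hx : x ≠ 0) (hint : IsIntegral ℤ x) : 1 ≤ |(f x).det| := by
  cases isEmpty_or_nonempty ι
  · simp
  obtain ⟨d, hd, hrat⟩ := exists_matrix_det_pow_mem_range_algebraMap f
  have hdet : (f x).det ≠ 0 :=
    ((isUnit_iff_isUnit_det _).1 ((isUnit_iff_ne_zero.2 hx).map f)).ne_zero
  exact one_le_abs_of_isIntegral_of_pow_mem_range
    (isIntegral_matrix_det (hint.map (f.restrictScalars ℤ))) hdet hd (hrat x)

section SpecialOrthogonal

variable {ι R : Type*} [Fintype ι] [DecidableEq ι] [CommRing R]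

theorem det_sub_eq_zero_of_mem_specialOrthogonalGroup [IsAddTorsionFree R]
    (hodd : Odd (Fintype.card ι)) {u w : Matrix ι ι R}
    (hu : u ∈ specialOrthogonalGroup ι R) (hw : w ∈ specialOrthogonalGroup ι R) :
    (u - w).det = 0 := by
  obtain ⟨hu, hudet⟩ := mem_specialOrthogonalGroup_iff.1 hu
  obtain ⟨hw, hwdet⟩ := mem_specialOrthogonalGroup_iff.1 hw
  have hconj : uᵀ * (u - w) * wᵀ = -(u - w)ᵀ := by
    rw [mul_sub, sub_mul, mul_assoc uᵀ w, (mem_orthogonalGroup_iff' ι R).1 hu,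
      (mem_orthogonalGroup_iff ι R).1 hw, one_mul, mul_one, transpose_sub, neg_sub]
  rw [← self_eq_neg]
  simpa [det_mul, hudet, hwdet, det_neg, hodd.neg_one_pow, -transpose_sub]
    using congrArg det hconj

theorem det_commutator_eq_zero_of_mem_specialOrthogonalGroup [IsAddTorsionFree R]
    (hodd : Odd (Fintype.card ι)) {k l : Matrix ι ι R}
    (hk : k ∈ specialOrthogonalGroup ι R) (hl : l ∈ specialOrthogonalGroup ι R) :
    (k * l - l * k).det = 0 :=
  det_sub_eq_zero_of_mem_specialOrthogonalGroup hodd (mul_mem hk hl) (mul_mem hl hk)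

theorem det_commutator_smul_conj (a b : R) (z : GL ι R) (X Y : Matrix ι ι R) :
    ((a • (z⁻¹.val * X * z.val)) * (b • (z⁻¹.val * Y * z.val)) -
      (b • (z⁻¹.val * Y * z.val)) * (a • (z⁻¹.val * X * z.val))).det =
      (a * b) ^ Fintype.card ι * (X * Y - Y * X).det := by
  have hconj (X Y : Matrix ι ι R) :
      (z⁻¹.val * X * z.val) * (z⁻¹.val * Y * z.val) = z⁻¹.val * (X * Y) * z.val := by
    simp only [mul_assoc, Units.mul_inv_cancel_left]
  rw [smul_mul_smul_comm, smul_mul_smul_comm, mul_comm b a, ← smul_sub, hconj, hconj, ← sub_mul,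
    ← mul_sub, det_smul, det_units_conj']

end SpecialOrthogonal

section EntrywiseNorm

attribute [local instance] Matrix.normedAddCommGroup Matrix.normedSpace

variable {ι : Type*} [Fintype ι] [DecidableEq ι]

theorem contDiff_det_commutator {r : WithTop ℕ∞} :
    ContDiff ℝ r fun p : Matrix ι ι ℝ × Matrix ι ι ℝ ↦ (p.1 * p.2 - p.2 * p.1).det := by
  simp only [det_apply', Matrix.sub_apply, mul_apply]
  fun_prop

theorem norm_le_one_of_mem_specialOrthogonalGroup {k : Matrix ι ι ℝ}
    (hk : k ∈ specialOrthogonalGroup ι ℝ) : ‖k‖ ≤ 1 :=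
  entrywise_sup_norm_bound_of_unitary (mem_specialOrthogonalGroup_iff.1 hk).1

theorem exists_lipschitzOnWith_det_commutator (r : ℝ) :
    ∃ C, LipschitzOnWith C (fun p : Matrix ι ι ℝ × Matrix ι ι ℝ ↦ (p.1 * p.2 - p.2 * p.1).det)
      (Metric.closedBall 0 r) :=
  contDiff_det_commutator.contDiffOn.exists_lipschitzOnWith one_ne_zero
    (convex_closedBall _ r) (isCompact_closedBall _ _)

theorem exists_abs_det_commutator_le (hodd : Odd (Fintype.card ι)) :
    ∃ C : ℝ, 0 ≤ C ∧ ∀ k ∈ specialOrthogonalGroup ι ℝ, ∀ l ∈ specialOrthogonalGroup ι ℝ,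
      ∀ δ ≤ 1, ∀ P Q : Matrix ι ι ℝ, ‖P - k‖ ≤ δ → ‖Q - l‖ ≤ δ →
        |(P * Q - Q * P).det| ≤ C * δ := by
  obtain ⟨C, hC⟩ := exists_lipschitzOnWith_det_commutator (ι := ι) 2
  refine ⟨C, C.coe_nonneg, fun k hk l hl δ hδ P Q hP hQ ↦ ?_⟩
  have hnorm {k P : Matrix ι ι ℝ} (hk : k ∈ specialOrthogonalGroup ι ℝ) (hP : ‖P - k‖ ≤ δ) :
      ‖P‖ ≤ 2 := by
    linarith [norm_le_norm_add_norm_sub' P k, norm_le_one_of_mem_specialOrthogonalGroup hk]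
  have hball {P Q : Matrix ι ι ℝ} (hP : ‖P‖ ≤ 2) (hQ : ‖Q‖ ≤ 2) :
      (P, Q) ∈ Metric.closedBall (0 : Matrix ι ι ℝ × Matrix ι ι ℝ) 2 := by
    simpa [Prod.norm_def] using ⟨hP, hQ⟩
  have hnorm' {k : Matrix ι ι ℝ} (hk : k ∈ specialOrthogonalGroup ι ℝ) : ‖k‖ ≤ 2 :=
    (norm_le_one_of_mem_specialOrthogonalGroup hk).trans one_le_two
  have hlip := hC.norm_sub_le (hball (hnorm hk hP) (hnorm hl hQ)) (hball (hnorm' hk) (hnorm' hl))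
  rw [det_commutator_eq_zero_of_mem_specialOrthogonalGroup hodd hk hl, sub_zero] at hlip
  refine hlip.trans (mul_le_mul_of_nonneg_left ?_ C.coe_nonneg)
  simpa only [Prod.norm_def, sup_le_iff] using ⟨hP, hQ⟩

end EntrywiseNorm

section NormalizedConj

attribute [local instance] Matrix.normedAddCommGroup

/-- The matrix `m^{-1/n} z⁻¹ M z` which the definition of `OSet` compares with `SO(n)`. It has
determinant one when `M` has determinant `m`. -/
noncomputable def normalizedConj {n : ℕ} (z : GL (Fin n) ℝ) (m : ℕ)
    (M : Matrix (Fin n) (Fin n) ℝ) : Matrix (Fin n) (Fin n) ℝ :=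
  ((m : ℝ) ^ (-(1 : ℝ) / (n : ℝ))) • (z⁻¹.val * M * z.val)

theorem det_commutator_normalizedConj {n : ℕ} (hn : n ≠ 0) (z : GL (Fin n) ℝ) (m m' : ℕ)
    (X Y : Matrix (Fin n) (Fin n) ℝ) :
    (normalizedConj z m X * normalizedConj z m' Y -
      normalizedConj z m' Y * normalizedConj z m X).det = (m * m' : ℝ)⁻¹ * (X * Y - Y * X).det := by
  have hpow (a : ℕ) : ((a : ℝ) ^ (-(1 : ℝ) / n)) ^ n = (a : ℝ)⁻¹ := by
    rw [← Real.rpow_mul_natCast a.cast_nonneg, div_mul_cancel₀ _ (Nat.cast_ne_zero.2 hn),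
      Real.rpow_neg_one]
  rw [normalizedConj, normalizedConj, det_commutator_smul_conj, Fintype.card_fin, mul_pow, hpow,
    hpow, mul_inv]

theorem exists_norm_normalizedConj_sub_le {n : ℕ} {A : Type*} [DivisionRing A] [CharZero A]
    {ι : A →ₐ[ℚ] Matrix (Fin n) (Fin n) ℝ} {O : Subring A} {z : GL (Fin n) ℝ} {m : ℕ} {δ : ℝ}
    (hn : n ≠ 0) {x : A} (hx : x ∈ OSet ι O z m δ) :
    ∃ k ∈ specialOrthogonalGroup (Fin n) ℝ, ‖normalizedConj z m (ι x) - k‖ ≤ δ := by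
  obtain ⟨-, -, k, ⟨hk, hkdet⟩, hclose⟩ := hx
  have hδ : 0 ≤ δ := (abs_nonneg _).trans (hclose ⟨0, hn.bot_lt⟩ ⟨0, hn.bot_lt⟩).le
  exact ⟨k, mem_specialOrthogonalGroup_iff.2 ⟨(mem_orthogonalGroup_iff' _ _).2 hk, hkdet⟩,
    (Matrix.norm_le_iff hδ).2 fun i j ↦ (hclose i j).le⟩

end NormalizedConj

theorem exists_forall_commute_of_mem_oSet.{u} {n : ℕ} (hodd : Odd n) :
    ∃ c : ℝ, 0 < c ∧
      ∀ (A : Type u) [DivisionRing A] [CharZero A] [Algebra.IsCentral ℚ A]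
        (ι : A →ₐ[ℚ] Matrix (Fin n) (Fin n) ℝ) (O : Subring A), (∀ x ∈ O, IsIntegral ℤ x) →
      ∀ (z : GL (Fin n) ℝ) (m m' : ℕ) (δ : ℝ), m ≠ 0 → m' ≠ 0 → δ ≤ c / (m * m') →
      ∀ x ∈ OSet ι O z m δ, ∀ y ∈ OSet ι O z m' δ, Commute x y := by
  obtain ⟨C, hC0, hC⟩ := exists_abs_det_commutator_le (ι := Fin n) (by rwa [Fintype.card_fin])
  refine ⟨(C + 1)⁻¹, by positivity, fun A _ _ _ ι O hO z m m' δ hm hm' hδ x hx y hy ↦ ?_⟩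
  by_contra hxy
  have hmm' : (1 : ℝ) ≤ m * m' := by
    exact_mod_cast Nat.one_le_iff_ne_zero.2 (mul_ne_zero hm hm')
  have hδ1 : δ ≤ 1 := hδ.trans <| div_le_one_of_le₀
    ((inv_le_one_of_one_le₀ (by linarith)).trans hmm') (by positivity)
  obtain ⟨k, hk, hxk⟩ := exists_norm_normalizedConj_sub_le hodd.pos.ne' hx
  obtain ⟨l, hl, hyl⟩ := exists_norm_normalizedConj_sub_le hodd.pos.ne' hy
  have hupper := hC k hk l hl δ hδ1 _ _ hxk hyl
  have hlower : 1 ≤ |(ι x * ι y - ι y * ι x).det| := by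
    simpa using one_le_abs_det_of_isIntegral ι (sub_ne_zero.2 hxy)
      (hO _ (sub_mem (mul_mem hx.1 hy.1) (mul_mem hy.1 hx.1)))
  rw [det_commutator_normalizedConj hodd.pos.ne', abs_mul, abs_of_pos (by positivity)] at hupper
  have : (m * m' : ℝ)⁻¹ < (m * m' : ℝ)⁻¹ := calc
    (m * m' : ℝ)⁻¹ ≤ (m * m' : ℝ)⁻¹ * |(ι x * ι y - ι y * ι x).det| :=
        le_mul_of_one_le_right (by positivity) hlower
    _ ≤ C * δ := hupper
    _ ≤ C * ((C + 1)⁻¹ / (m * m')) := by gcongr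
    _ = C / (C + 1) * (m * m' : ℝ)⁻¹ := by ring
    _ < (m * m' : ℝ)⁻¹ :=
        mul_lt_of_lt_one_left (by positivity) ((div_lt_one (by linarith)).2 (by linarith))
  exact this.false

theorem IsOrder.isIntegral {A : Type*} [Ring A] [Algebra ℚ A] {O : Subring A} (hO : IsOrder A O)
    {x : A} (hx : x ∈ O) : IsIntegral ℤ x := by
  have : AddGroup.FG O := (AddGroup.fg_iff_addSubgroup_fg O.toAddSubgroup).2 hO.1
  have : Module.Finite ℤ O := Module.Finite.iff_addGroup_fg.2 this
  exact (IsIntegral.of_finite ℤ (⟨x, hx⟩ : O)).map O.subtype.toIntAlgHom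

theorem stmt14_general.{u} {n : ℕ} (hodd : Odd n) :
    ∃ c : ℝ, 0 < c ∧
      ∀ (A : Type u) [DivisionRing A] [CharZero A] [Algebra.IsCentral ℚ A]
        (ι : A →ₐ[ℚ] Matrix (Fin n) (Fin n) ℝ) (O : Subring A), (∀ x ∈ O, IsIntegral ℤ x) →
      ∀ (z : GL (Fin n) ℝ) (L δ : ℝ), δ ≤ c / L ^ 2 →
        IsMulCommutative
          (Algebra.adjoin ℚ (⋃ m ∈ {m : ℕ | 1 ≤ m ∧ (m : ℝ) ≤ L}, OSet ι O z m δ)) := by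
  obtain ⟨c, hc, hcomm⟩ := exists_forall_commute_of_mem_oSet.{u} hodd
  refine ⟨c, hc, fun A _ _ _ ι O hO z L δ hδ ↦ Algebra.isMulCommutative_adjoin ℚ ?_⟩
  simp only [Set.mem_iUnion₂]
  rintro x ⟨m, ⟨hm, hmL⟩, hx⟩ y ⟨m', ⟨hm', hmL'⟩, hy⟩
  refine hcomm A ι O hO z m m' δ (by omega) (by omega) (hδ.trans ?_) x hx y hy
  rw [sq]
  gcongr
  exact m.cast_nonneg.trans hmL

theorem mul_rpow_neg_two_sub_le_div_sq {c L ε : ℝ} (hc : 0 ≤ c) (hL : 1 ≤ L) (hε : 0 ≤ ε) :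
    c * L ^ (-2 - ε) ≤ c / L ^ 2 := by
  rw [div_eq_mul_inv, ← Real.rpow_natCast, ← Real.rpow_neg (zero_le_one.trans hL)]
  refine mul_le_mul_of_nonneg_left (Real.rpow_le_rpow_of_exponent_le hL ?_) hc
  push_cast
  linarith

/-- For odd `n ≥ 3` and `ε > 0` there is `c > 0`, depending only on `n, ε`,
such that whenever `0 < δ ≤ c·L^(-2-ε)`, the `ℚ`-subalgebra of `A` generated by
`⋃_{1 ≤ m ≤ L} 𝒪(m; z, δ)` is commutative (hence a field). -/
theorem stmt14 (n : ℕ) (hn : 3 ≤ n) (hodd : Odd n) (ε : ℝ) (hε : 0 < ε) :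
    ∃ c : ℝ, 0 < c ∧
      ∀ (A : Type) [DivisionRing A] [CharZero A]
        (ι : A →ₐ[ℚ] Matrix (Fin n) (Fin n) ℝ),
        Function.Injective ι →
        Subalgebra.center ℚ A = ⊥ →
        Module.finrank ℚ A = n ^ 2 →
        ∀ O : Subring A, IsOrder A O →
        ∀ z : Matrix.GeneralLinearGroup (Fin n) ℝ,
        ∀ L : ℝ, 1 ≤ L →
        ∀ δ : ℝ, 0 < δ → δ ≤ c * L ^ (-2 - ε) →
        ∀ x ∈ Algebra.adjoin ℚ (⋃ m ∈ {m : ℕ | 1 ≤ m ∧ (m : ℝ) ≤ L}, OSet ι O z m δ),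
        ∀ y ∈ Algebra.adjoin ℚ (⋃ m ∈ {m : ℕ | 1 ≤ m ∧ (m : ℝ) ≤ L}, OSet ι O z m δ),
          x * y = y * x := by
  obtain ⟨c, hc, hcomm⟩ := stmt14_general hodd
  refine ⟨c, hc, fun A _ _ ι _ hcenter _ O hO z L hL δ _ hδ x hx y hy ↦ ?_⟩
  have : Algebra.IsCentral ℚ A := ⟨hcenter.le⟩
  have := hcomm A ι O (fun _ ↦ hO.isIntegral) z L δ
    (hδ.trans (mul_rpow_neg_two_sub_le_div_sq hc.le hL hε.le))
  exact setLike_mul_comm hx hy
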